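/- Let g ∈ GL(d,ℝ) have a gap of index p (so that g⁻¹ has a gap of index d−p). Then for every p-dimensional subspace P ⊆ ℝ^d with P ∩ U_{d−p}(g⁻¹) = {0}, one has d(g·P, U_p(g)) ≤ (σ_{p+1}(g)/σ_p(g)) · (1/sin∠(P, U_{d−p}(g⁻¹))). -/

import Mathlib

noncomputable section

open scoped Matrix RealInnerProductSpace
open Filter Topology

namespace Paper

abbrev Euc (d : ℕ) : Type := EuclideanSpace ℝ (Fin d)

/-- The action of a `d × d` real matrix on Euclidean space. -/
def act {d : ℕ} (g : Matrix (Fin d) (Fin d) ℝ) (v : Euc d) : Euc d :=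
  Matrix.toEuclideanCLM (𝕜 := ℝ) g v

/-- The operator norm of a matrix acting on Euclidean space. -/
def opNorm {d : ℕ} (g : Matrix (Fin d) (Fin d) ℝ) : ℝ :=
  ‖(Matrix.toEuclideanCLM (𝕜 := ℝ) g : Euc d →L[ℝ] Euc d)‖

/-- The underlying matrix of an element of `GL (Fin d) ℝ`. -/
def mat {d : ℕ} (g : GL (Fin d) ℝ) : Matrix (Fin d) (Fin d) ℝ := ↑g

/-- The `p`-th singular value (`1`-indexed), via the min-max characterization:
`σ_p(g)` is the largest, over `p`-dimensional subspaces `P`, of the minimal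
stretch of unit vectors of `P`. -/
def sv {d : ℕ} (g : Matrix (Fin d) (Fin d) ℝ) (p : ℕ) : ℝ :=
  sSup { r | ∃ P : Submodule ℝ (Euc d), Module.finrank ℝ P = p ∧
      r = sInf { t | ∃ v ∈ P, ‖v‖ = 1 ∧ t = ‖act g v‖ } }

/-- `g` has a gap of index `p` if `σ_p(g) > σ_{p+1}(g)`. -/
def HasGap {d : ℕ} (g : Matrix (Fin d) (Fin d) ℝ) (p : ℕ) : Prop :=
  sv g (p + 1) < sv g p

/-- `U` is a Cartan attractor of index `p` for `g`: for some singular value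
decomposition `g = k·a·l` (`k`, `l` orthogonal, `a` diagonal with decreasing
nonnegative entries), `U` is the span of the first `p` columns of `k`. -/
def IsCartanAttractor {d : ℕ} (g : Matrix (Fin d) (Fin d) ℝ) (p : ℕ)
    (U : Submodule ℝ (Euc d)) : Prop :=
  ∃ k l : Matrix (Fin d) (Fin d) ℝ, ∃ σ : Fin d → ℝ,
    k ∈ Matrix.unitaryGroup (Fin d) ℝ ∧ l ∈ Matrix.unitaryGroup (Fin d) ℝ ∧
    (∀ i j : Fin d, i ≤ j → σ j ≤ σ i) ∧ (∀ i, 0 ≤ σ i) ∧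
    g = k * Matrix.diagonal σ * l ∧
    U = Submodule.span ℝ { x : Euc d | ∃ i : Fin d, (i : ℕ) < p ∧
          x = (EuclideanSpace.equiv (Fin d) ℝ).symm (fun j => k j i) }

/-- The Cartan attractor `U_p(g)`; when `g` has a gap of index `p` it is the
unique subspace satisfying `IsCartanAttractor g p`. -/
def cartanAttractor {d : ℕ} (g : Matrix (Fin d) (Fin d) ℝ) (p : ℕ) :
    Submodule ℝ (Euc d) :=
  letI := Classical.propDecidable (∃ U, IsCartanAttractor g p U)
  if h : ∃ U, IsCartanAttractor g p U then h.choose else ⊥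

/-- The angle `∠(P,Q)` between two subspaces: the infimum of angles between
nonzero vectors of `P` and `Q`. -/
def subAngle {d : ℕ} (P Q : Submodule ℝ (Euc d)) : ℝ :=
  sInf { θ | ∃ v ∈ P, v ≠ 0 ∧ ∃ w ∈ Q, w ≠ 0 ∧ θ = InnerProductGeometry.angle v w }

/-- `sin ∠(v,w)`. -/
def sinAngle {d : ℕ} (v w : Euc d) : ℝ := Real.sin (InnerProductGeometry.angle v w)

/-- The distance `d(P,Q) = max_{v ∈ P∖{0}} min_{w ∈ Q∖{0}} sin ∠(v,w)`. -/
def grassDist {d : ℕ} (P Q : Submodule ℝ (Euc d)) : ℝ :=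
  sSup { r | ∃ v ∈ P, v ≠ 0 ∧
      r = sInf { s | ∃ w ∈ Q, w ≠ 0 ∧ s = sinAngle v w } }

/-- The image `g·P` of a subspace under a matrix. -/
def mapMat {d : ℕ} (g : Matrix (Fin d) (Fin d) ℝ) (P : Submodule ℝ (Euc d)) :
    Submodule ℝ (Euc d) :=
  P.map ((Matrix.toEuclideanCLM (𝕜 := ℝ) g : Euc d →L[ℝ] Euc d) : Euc d →ₗ[ℝ] Euc d)

/-- `m(g|_W)`, the minimal stretch of unit vectors of `W` under `g`. -/
def minRestrict {d : ℕ} (g : Matrix (Fin d) (Fin d) ℝ) (W : Submodule ℝ (Euc d)) : ℝ :=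
  sInf { t | ∃ v ∈ W, ‖v‖ = 1 ∧ t = ‖act g v‖ }

/-- `‖g|_W‖`, the maximal stretch of unit vectors of `W` under `g`. -/
def normRestrict {d : ℕ} (g : Matrix (Fin d) (Fin d) ℝ) (W : Submodule ℝ (Euc d)) : ℝ :=
  sSup { t | ∃ v ∈ W, ‖v‖ = 1 ∧ t = ‖act g v‖ }

/-! In a singular value decomposition of `g` with a gap of index `p`, the orthogonal complement of
`S = U_{d-p}(g⁻¹)` is spanned by the first `p` right singular vectors: `g` maps it onto
`U = U_p(g)`, stretching by at least `σ_p`, and maps `S` onto `Uᗮ`, stretching by at most `σ_{p+1}`.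
Write `v = a + b` with `a ∈ Sᗮ` and `b ∈ S`. The sine of the angle from `v` to `S` is `‖a‖ / ‖v‖`,
the sine of the angle from `g v` to `U` is `‖g b‖ / ‖g v‖`, and their product is at most
`σ_{p+1} / σ_p` because `‖g b‖ ≤ σ_{p+1} ‖v‖` and `σ_p ‖a‖ ≤ ‖g a‖ ≤ ‖g v‖`. -/

section AngleToSubspace

variable {E F : Type*} [NormedAddCommGroup E] [InnerProductSpace ℝ E]
  [NormedAddCommGroup F] [InnerProductSpace ℝ F]

/-- The sine of the angle between `v` and the subspace `K`, computed as the normalized distance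
from `v` to `K`. It is `0` for `v = 0` and `1` for `K = ⊥`, `v ≠ 0`. -/
def sinAngleTo (K : Submodule ℝ E) [K.HasOrthogonalProjection] (v : E) : ℝ :=
  ‖Kᗮ.starProjection v‖ / ‖v‖

variable (K : Submodule ℝ E) [K.HasOrthogonalProjection]

lemma sinAngleTo_nonneg (v : E) : 0 ≤ sinAngleTo K v := by
  unfold sinAngleTo
  positivity

lemma sinAngleTo_le_one (v : E) : sinAngleTo K v ≤ 1 :=
  div_le_one_of_le₀ (Kᗮ.norm_starProjection_apply_le v) (norm_nonneg v)

variable {K}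

lemma sinAngleTo_le_sin_angle {v w : E} (hw : w ∈ K) (hw0 : w ≠ 0) :
    sinAngleTo K v ≤ Real.sin (InnerProductGeometry.angle v w) := by
  rcases eq_or_ne v 0 with rfl | hv0
  · simp [sinAngleTo]
  have hv_pos : 0 < ‖v‖ := norm_pos_iff.mpr hv0
  have hw_pos : 0 < ‖w‖ := norm_pos_iff.mpr hw0
  have hinner : ⟪v, w⟫ = ⟪K.starProjection v, w⟫ := by
    rw [K.inner_starProjection_left_eq_right, K.starProjection_eq_self_iff.mpr hw]
  have hcos : |Real.cos (InnerProductGeometry.angle v w)| ≤ ‖K.starProjection v‖ / ‖v‖ := by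
    rw [InnerProductGeometry.cos_angle, hinner, abs_div, abs_of_pos (mul_pos hv_pos hw_pos),
      div_le_div_iff₀ (mul_pos hv_pos hw_pos) hv_pos]
    calc |⟪K.starProjection v, w⟫| * ‖v‖ ≤ ‖K.starProjection v‖ * ‖w‖ * ‖v‖ := by
          gcongr
          exact abs_real_inner_le_norm _ _
      _ = ‖K.starProjection v‖ * (‖v‖ * ‖w‖) := by ring
  refine le_of_sq_le_sq ?_ (InnerProductGeometry.sin_angle_nonneg v w)
  calc sinAngleTo K v ^ 2 = 1 - (‖K.starProjection v‖ / ‖v‖) ^ 2 := by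
        rw [sinAngleTo, div_pow, div_pow, eq_sub_iff_add_eq, ← add_div, add_comm,
          ← K.norm_sq_eq_add_norm_sq_starProjection, div_self (by positivity)]
    _ ≤ 1 - Real.cos (InnerProductGeometry.angle v w) ^ 2 := by
        rw [← sq_abs (Real.cos _)]
        gcongr
    _ = Real.sin (InnerProductGeometry.angle v w) ^ 2 := (Real.sin_sq _).symm

lemma exists_sin_angle_eq_sinAngleTo (hK : K ≠ ⊥) {v : E} (hv0 : v ≠ 0) :
    ∃ w ∈ K, w ≠ 0 ∧ InnerProductGeometry.angle v w ≤ Real.pi / 2 ∧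
      Real.sin (InnerProductGeometry.angle v w) = sinAngleTo K v := by
  have hsum := K.starProjection_add_starProjection_orthogonal v
  by_cases hproj : K.starProjection v = 0
  · obtain ⟨w, hw, hw0⟩ := Submodule.exists_mem_ne_zero_of_ne_bot hK
    have hangle : InnerProductGeometry.angle v w = Real.pi / 2 := by
      rw [← InnerProductGeometry.inner_eq_zero_iff_angle_eq_pi_div_two,
        ← K.starProjection_eq_self_iff.mpr hw, ← K.inner_starProjection_left_eq_right, hproj,
        inner_zero_left]
    rw [hproj, zero_add] at hsum
    refine ⟨w, hw, hw0, hangle.le, ?_⟩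
    rw [hangle, Real.sin_pi_div_two, sinAngleTo, hsum, div_self (norm_ne_zero_iff.mpr hv0)]
  · have horth : ⟪K.starProjection v, Kᗮ.starProjection v⟫ = 0 :=
      Submodule.inner_right_of_mem_orthogonal (K.starProjection_apply_mem v)
        (Kᗮ.starProjection_apply_mem v)
    have hangle := InnerProductGeometry.angle_add_le_pi_div_two_of_inner_eq_zero horth
    have hsin := InnerProductGeometry.sin_angle_add_of_inner_eq_zero horth (Or.inl hproj)
    rw [hsum, InnerProductGeometry.angle_comm] at hangle hsin
    exact ⟨_, K.starProjection_apply_mem v, hproj, hangle, hsin⟩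

lemma exists_pos_le_sinAngleTo {P : Submodule ℝ E} [FiniteDimensional ℝ P] (hPK : Disjoint P K) :
    ∃ c > 0, ∀ v ∈ P, v ≠ 0 → c ≤ sinAngleTo K v := by
  let π : P →ₗ[ℝ] E := (Kᗮ.starProjection : E →ₗ[ℝ] E) ∘ₗ P.subtype
  have hπ : LinearMap.ker π = ⊥ := LinearMap.ker_eq_bot'.mpr fun v hv ↦ by
    have hvK : (v : E) ∈ K := by
      rw [← K.orthogonal_orthogonal, ← Submodule.starProjection_apply_eq_zero_iff]
      exact hv
    exact Subtype.ext (Submodule.disjoint_def.mp hPK v v.2 hvK)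
  obtain ⟨C, hC, hπC⟩ := π.exists_antilipschitzWith hπ
  refine ⟨(C : ℝ)⁻¹, inv_pos.mpr hC, fun v hv hv0 ↦ ?_⟩
  have hbound : ‖v‖ ≤ C * ‖Kᗮ.starProjection v‖ := by
    simpa [π] using hπC.le_mul_dist ⟨v, hv⟩ 0
  rwa [sinAngleTo, le_div_iff₀ (norm_pos_iff.mpr hv0), inv_mul_le_iff₀ (NNReal.coe_pos.mpr hC)]

lemma sinAngleTo_map_mul_sinAngleTo_le {T : E →ₗ[ℝ] F} {U : Submodule ℝ F}
    [U.HasOrthogonalProjection] (hK : ∀ x ∈ K, T x ∈ Uᗮ) (hKperp : ∀ x ∈ Kᗮ, T x ∈ U)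
    {α β : ℝ} (hα : 0 < α) (hαT : ∀ x ∈ Kᗮ, α * ‖x‖ ≤ ‖T x‖)
    (hβ : 0 ≤ β) (hTβ : ∀ x ∈ K, ‖T x‖ ≤ β * ‖x‖) (v : E) :
    sinAngleTo U (T v) * sinAngleTo K v ≤ β / α := by
  set a := Kᗮ.starProjection v with ha
  set b := K.starProjection v
  have hTa : T a ∈ U := hKperp a (Kᗮ.starProjection_apply_mem v)
  have hTb : T b ∈ Uᗮ := hK b (K.starProjection_apply_mem v)
  have hTv : T v = T a + T b := by
    rw [← map_add, add_comm, K.starProjection_add_starProjection_orthogonal]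
  have hUTv : U.starProjection (T v) = T a := by
    rw [hTv, map_add, U.starProjection_eq_self_iff.mpr hTa,
      U.starProjection_apply_eq_zero_iff.mpr hTb, add_zero]
  have hUperpTv : Uᗮ.starProjection (T v) = T b := by
    rw [U.starProjection_orthogonal_val, hUTv, hTv, add_sub_cancel_left]
  have hb_le : ‖T b‖ ≤ β * ‖v‖ := (hTβ b (K.starProjection_apply_mem v)).trans
    (mul_le_mul_of_nonneg_left (K.norm_starProjection_apply_le v) hβ)
  have ha_le : ‖a‖ ≤ ‖T v‖ / α := by
    rw [le_div_iff₀' hα]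
    calc α * ‖a‖ ≤ ‖T a‖ := hαT a (Kᗮ.starProjection_apply_mem v)
      _ ≤ ‖T v‖ := hUTv ▸ U.norm_starProjection_apply_le (T v)
  rw [sinAngleTo, sinAngleTo, hUperpTv, ← ha, div_mul_div_comm]
  refine div_le_of_le_mul₀ (by positivity) (by positivity) ?_
  calc ‖T b‖ * ‖a‖ ≤ β * ‖v‖ * (‖T v‖ / α) := by gcongr
    _ = β / α * (‖T v‖ * ‖v‖) := by ring

end AngleToSubspace

section SpanOrthonormalBasis

variable {ι 𝕜 E : Type*} [RCLike 𝕜] [Fintype ι] [NormedAddCommGroup E] [InnerProductSpace 𝕜 E]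
  (b : OrthonormalBasis ι 𝕜 E) (A : Set ι)

lemma mem_span_image_iff_inner_eq_zero {x : E} :
    x ∈ Submodule.span 𝕜 (b '' A) ↔ ∀ i ∉ A, inner 𝕜 (b i) x = 0 := by
  rw [← b.coe_toBasis, b.toBasis.mem_span_image]
  simp only [Set.subset_def, Finset.mem_coe, Finsupp.mem_support_iff, b.coe_toBasis_repr_apply,
    b.repr_apply_apply]
  exact forall_congr' fun i ↦ not_imp_comm

lemma orthogonal_span_image :
    (Submodule.span 𝕜 (b '' A))ᗮ = Submodule.span 𝕜 (b '' Aᶜ) := by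
  ext x
  simp only [mem_span_image_iff_inner_eq_zero, Set.notMem_compl_iff, Submodule.mem_orthogonal]
  refine ⟨fun hx i hi ↦ hx (b i) fun j hj ↦ ?_, fun hx u hu ↦ ?_⟩
  · exact b.orthonormal.inner_eq_zero (ne_of_mem_of_not_mem hi hj).symm
  · rw [← b.sum_inner_mul_inner]
    refine Finset.sum_eq_zero fun i _ ↦ ?_
    by_cases hi : i ∈ A
    · rw [hx i hi, mul_zero]
    · rw [inner_eq_zero_symm.mp (hu i hi), zero_mul]

lemma finrank_span_image (A : Finset ι) :
    Module.finrank 𝕜 (Submodule.span 𝕜 (b '' A)) = A.card := by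
  classical
  rw [← Finset.coe_image, finrank_span_finset_eq_card,
    Finset.card_image_of_injective _ b.orthonormal.linearIndependent.injective]
  rw [Finset.coe_image]
  exact (b.orthonormal.linearIndependent.linearIndepOn _).id_image

lemma span_image_ne_bot {A : Set ι} (hA : A.Nonempty) : Submodule.span 𝕜 (b '' A) ≠ ⊥ := by
  obtain ⟨i, hi⟩ := hA
  exact (Submodule.ne_bot_iff _).mpr
    ⟨b i, Submodule.subset_span (Set.mem_image_of_mem b hi), b.orthonormal.ne_zero i⟩

end SpanOrthonormalBasis

section SingularValueDecomposition

variable {ι E F : Type*} [Fintype ι] [NormedAddCommGroup E] [InnerProductSpace ℝ E]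
  [NormedAddCommGroup F] [InnerProductSpace ℝ F]

/-- A singular value decomposition of `T`, encoded by orthonormal bases rather than orthogonal
matrices: `T` sends the right singular vector `f i` to `s i` times the left singular vector `e i`.
The same index type on both sides forces the two spaces to have equal dimension. -/
structure IsSVD [Preorder ι] (T : E →ₗ[ℝ] F) (s : ι → ℝ) (e : OrthonormalBasis ι ℝ F)
    (f : OrthonormalBasis ι ℝ E) : Prop where
  antitone : Antitone s
  nonneg : ∀ i, 0 ≤ s i
  map : ∀ i, T (f i) = s i • e i

namespace IsSVD

variable [Preorder ι] {T : E →ₗ[ℝ] F} {s : ι → ℝ} {e : OrthonormalBasis ι ℝ F}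
  {f : OrthonormalBasis ι ℝ E}

lemma inner_map (h : IsSVD T s e f) (i : ι) (v : E) : ⟪e i, T v⟫ = s i * ⟪f i, v⟫ := by
  classical
  conv_lhs => rw [← f.sum_repr' v]
  simp [inner_sum, inner_smul_right, h.map, e.inner_eq_ite, mul_comm]

lemma sq_norm_map (h : IsSVD T s e f) (v : E) : ‖T v‖ ^ 2 = ∑ i, s i ^ 2 * ⟪f i, v⟫ ^ 2 := by
  simp only [← e.sum_sq_inner_right, h.inner_map, mul_pow]

lemma map_mem_span_image (h : IsSVD T s e f) {A : Set ι} {v : E}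
    (hv : v ∈ Submodule.span ℝ (f '' A)) : T v ∈ Submodule.span ℝ (e '' A) := by
  rw [mem_span_image_iff_inner_eq_zero] at hv ⊢
  intro i hi
  rw [h.inner_map, hv i hi, mul_zero]

lemma mul_norm_le_norm_map (h : IsSVD T s e f) {A : Set ι} {c : ℝ} (hc : 0 ≤ c)
    (hcs : ∀ i ∈ A, c ≤ s i) {v : E} (hv : v ∈ Submodule.span ℝ (f '' A)) :
    c * ‖v‖ ≤ ‖T v‖ := by
  rw [mem_span_image_iff_inner_eq_zero] at hv
  refine le_of_sq_le_sq ?_ (norm_nonneg _)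
  rw [mul_pow, h.sq_norm_map, ← f.sum_sq_inner_right, Finset.mul_sum]
  refine Finset.sum_le_sum fun i _ ↦ ?_
  by_cases hi : i ∈ A
  · gcongr
    exact hcs i hi
  · simp [hv i hi]

lemma norm_map_le_mul_norm (h : IsSVD T s e f) {A : Set ι} {c : ℝ} (hc : 0 ≤ c)
    (hsc : ∀ i ∈ A, s i ≤ c) {v : E} (hv : v ∈ Submodule.span ℝ (f '' A)) :
    ‖T v‖ ≤ c * ‖v‖ := by
  rw [mem_span_image_iff_inner_eq_zero] at hv
  refine le_of_sq_le_sq ?_ (by positivity)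
  rw [mul_pow, h.sq_norm_map, ← f.sum_sq_inner_right, Finset.mul_sum]
  refine Finset.sum_le_sum fun i _ ↦ ?_
  by_cases hi : i ∈ A
  · have := h.nonneg i
    gcongr
    exact hsc i hi
  · simp [hv i hi]

lemma sinAngleTo_map_mul_sinAngleTo_le [FiniteDimensional ℝ E] [FiniteDimensional ℝ F]
    (h : IsSVD T s e f) {A : Set ι} {α β : ℝ} (hα : 0 < α) (hαs : ∀ i ∈ A, α ≤ s i)
    (hβ : 0 ≤ β) (hsβ : ∀ i ∈ Aᶜ, s i ≤ β) (v : E) :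
    sinAngleTo (Submodule.span ℝ (e '' A)) (T v) * sinAngleTo (Submodule.span ℝ (f '' Aᶜ)) v
      ≤ β / α := by
  have horth : (Submodule.span ℝ (f '' Aᶜ))ᗮ = Submodule.span ℝ (f '' A) := by
    rw [orthogonal_span_image, compl_compl]
  refine Paper.sinAngleTo_map_mul_sinAngleTo_le (fun x hx ↦ ?_) (fun x hx ↦ ?_) hα
    (fun x hx ↦ ?_) hβ (fun x hx ↦ h.norm_map_le_mul_norm hβ hsβ hx) v
  · rw [orthogonal_span_image]
    exact h.map_mem_span_image hx
  · exact h.map_mem_span_image (horth ▸ hx)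
  · exact h.mul_norm_le_norm_map hα.le hαs (horth ▸ hx)

lemma pos (h : IsSVD T s e f) (hT : Function.Injective T) (i : ι) : 0 < s i := by
  refine (h.nonneg i).lt_of_ne' fun hi ↦ f.orthonormal.ne_zero i (hT ?_)
  rw [h.map, hi, zero_smul, map_zero]

-- `e i` and `e' j` are eigenvectors of `T Tᵀ` for the eigenvalues `s i ^ 2` and `s j ^ 2`.
lemma inner_eq_zero_of_ne (h : IsSVD T s e f) {e' : OrthonormalBasis ι ℝ F}
    {f' : OrthonormalBasis ι ℝ E} (h' : IsSVD T s e' f') {i j : ι} (hij : s i ≠ s j) :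
    ⟪e i, e' j⟫ = 0 := by
  have hfe : s j * ⟪e i, e' j⟫ = s i * ⟪f i, f' j⟫ := by
    rw [← h.inner_map, h'.map, inner_smul_right]
  have hef : s i * ⟪e i, e' j⟫ = s j * ⟪f i, f' j⟫ := by
    rw [real_inner_comm, real_inner_comm (f' j), ← h'.inner_map, h.map, inner_smul_right]
  have hsq : (s i ^ 2 - s j ^ 2) * ⟪e i, e' j⟫ = 0 := by
    linear_combination s i * hef - s j * hfe
  refine (mul_eq_zero.mp hsq).resolve_left fun h_eq ↦ hij ?_
  exact (sq_eq_sq₀ (h.nonneg i) (h.nonneg j)).mp (sub_eq_zero.mp h_eq)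

lemma span_image_le_of_ne (h : IsSVD T s e f) {e' : OrthonormalBasis ι ℝ F}
    {f' : OrthonormalBasis ι ℝ E} (h' : IsSVD T s e' f') {A : Set ι}
    (hA : ∀ i ∈ A, ∀ j ∉ A, s i ≠ s j) :
    Submodule.span ℝ (e '' A) ≤ Submodule.span ℝ (e' '' A) := by
  rw [Submodule.span_le, Set.image_subset_iff]
  intro i hi
  rw [Set.mem_preimage, SetLike.mem_coe, mem_span_image_iff_inner_eq_zero]
  exact fun j hj ↦ h'.inner_eq_zero_of_ne h (hA i hi j hj).symm

lemma span_image_eq_of_ne (h : IsSVD T s e f) {e' : OrthonormalBasis ι ℝ F}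
    {f' : OrthonormalBasis ι ℝ E} (h' : IsSVD T s e' f') {A : Set ι}
    (hA : ∀ i ∈ A, ∀ j ∉ A, s i ≠ s j) :
    Submodule.span ℝ (e '' A) = Submodule.span ℝ (e' '' A) :=
  (h.span_image_le_of_ne h' hA).antisymm (h'.span_image_le_of_ne h hA)

end IsSVD

variable {d : ℕ}

lemma IsSVD.of_leftInverse {T : E →ₗ[ℝ] F} {T' : F →ₗ[ℝ] E} {s : Fin d → ℝ}
    {e : OrthonormalBasis (Fin d) ℝ F} {f : OrthonormalBasis (Fin d) ℝ E} (h : IsSVD T s e f)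
    (hT : Function.LeftInverse T' T) :
    IsSVD T' (fun i ↦ (s i.rev)⁻¹) (f.reindex Fin.revPerm) (e.reindex Fin.revPerm) where
  antitone _ _ hij := inv_anti₀ (h.pos hT.injective _) (h.antitone (Fin.rev_le_rev.mpr hij))
  nonneg i := inv_nonneg.mpr (h.nonneg i.rev)
  map i := by
    have hmap : s i.rev • T' (e i.rev) = f i.rev := by rw [← map_smul, ← h.map, hT]
    simp only [OrthonormalBasis.reindex_apply, Fin.revPerm_symm, Fin.revPerm_apply]
    rw [← hmap, inv_smul_smul₀ (h.pos hT.injective _).ne']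

lemma exists_isSVD [FiniteDimensional ℝ E] [FiniteDimensional ℝ F] (T : E →ₗ[ℝ] F)
    (hE : Module.finrank ℝ E = d) (hF : Module.finrank ℝ F = d) :
    ∃ (s : Fin d → ℝ) (e : OrthonormalBasis (Fin d) ℝ F) (f : OrthonormalBasis (Fin d) ℝ E),
      IsSVD T s e f := by
  let s : Fin d → ℝ := fun i ↦ T.singularValues i
  let f := T.isSymmetric_adjoint_comp_self.eigenvectorBasis hE
  have hinner (i j : Fin d) : ⟪T (f i), T (f j)⟫ = if i = j then s j ^ 2 else 0 := by
    have hf : T.adjoint (T (f j)) = (s j ^ 2) • f j := by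
      rw [T.sq_singularValues_fin hE]
      exact T.isSymmetric_adjoint_comp_self.apply_eigenvectorBasis hE j
    rw [← LinearMap.adjoint_inner_right, hf, inner_smul_right, f.inner_eq_ite, mul_ite, mul_one,
      mul_zero]
  have horth : Orthonormal ℝ ({i | s i ≠ 0}.domRestrict fun i ↦ (s i)⁻¹ • T (f i)) := by
    rw [orthonormal_iff_ite]
    rintro ⟨i, hi⟩ ⟨j, hj⟩
    simp only [Set.domRestrict_apply, real_inner_smul_left, real_inner_smul_right, hinner,
      Subtype.mk.injEq]
    split_ifs with hij
    · subst hij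
      field_simp [show s i ≠ 0 from hi]
    · simp
  obtain ⟨e, he⟩ := horth.exists_orthonormalBasis_extension_of_card_eq (by simpa using hF)
  refine ⟨s, e, f, fun i j hij ↦ T.singularValues_antitone hij, fun i ↦ T.singularValues_nonneg i,
    fun i ↦ ?_⟩
  by_cases hi : s i = 0
  · rw [hi, zero_smul, ← inner_self_eq_zero (𝕜 := ℝ), hinner, if_pos rfl, hi, zero_pow two_ne_zero]
  · rw [he i hi, smul_inv_smul₀ hi]

end SingularValueDecomposition

section Matrices

variable {d : ℕ} {g : Matrix (Fin d) (Fin d) ℝ}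

lemma minRestrict_mul_norm_le {P : Submodule ℝ (Euc d)} {v : Euc d} (hv : v ∈ P) :
    minRestrict g P * ‖v‖ ≤ ‖act g v‖ := by
  rcases eq_or_ne v 0 with rfl | hv0
  · simp
  have hv_pos : 0 < ‖v‖ := norm_pos_iff.mpr hv0
  rw [← le_div_iff₀ hv_pos]
  refine csInf_le ⟨0, ?_⟩ ⟨‖v‖⁻¹ • v, P.smul_mem _ hv, norm_smul_inv_norm hv0, ?_⟩
  · rintro _ ⟨w, -, -, rfl⟩
    exact norm_nonneg _
  · simp only [act, map_smul, norm_smul, norm_inv, norm_norm, inv_mul_eq_div]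

lemma le_minRestrict {P : Submodule ℝ (Euc d)} (hP : P ≠ ⊥) {c : ℝ}
    (hc : ∀ v ∈ P, c * ‖v‖ ≤ ‖act g v‖) : c ≤ minRestrict g P := by
  obtain ⟨v, hv, hv0⟩ := Submodule.exists_mem_ne_zero_of_ne_bot hP
  refine le_csInf ⟨_, ‖v‖⁻¹ • v, P.smul_mem _ hv, norm_smul_inv_norm hv0, rfl⟩ ?_
  rintro _ ⟨w, hw, hw1, rfl⟩
  simpa [hw1] using hc w hw

lemma IsSVD.minRestrict_le {s : Fin d → ℝ} {e f : OrthonormalBasis (Fin d) ℝ (Euc d)}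
    (h : IsSVD g.toEuclideanLin s e f) (i : Fin d) {P : Submodule ℝ (Euc d)}
    (hP : (i : ℕ) < Module.finrank ℝ P) : minRestrict g P ≤ s i := by
  have hmeet : ¬Disjoint P (Submodule.span ℝ (f '' Finset.Ici i)) := fun hdisj ↦ by
    have hdim := Submodule.finrank_add_finrank_le_of_disjoint hdisj
    rw [finrank_span_image, Fin.card_Ici, finrank_euclideanSpace_fin] at hdim
    omega
  obtain ⟨v, ⟨hvP, hvf⟩, hv0⟩ :=
    Submodule.exists_mem_ne_zero_of_ne_bot (disjoint_iff.not.mp hmeet)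
  refine le_of_mul_le_mul_right ?_ (norm_pos_iff.mpr hv0)
  calc minRestrict g P * ‖v‖ ≤ ‖act g v‖ := minRestrict_mul_norm_le hvP
    _ ≤ s i * ‖v‖ :=
      h.norm_map_le_mul_norm (h.nonneg i) (fun j hj ↦ h.antitone (Finset.mem_Ici.mp hj)) hvf

lemma IsSVD.sv_succ {s : Fin d → ℝ} {e f : OrthonormalBasis (Fin d) ℝ (Euc d)}
    (h : IsSVD g.toEuclideanLin s e f) (i : Fin d) : sv g (i + 1) = s i := by
  refine IsGreatest.csSup_eq ⟨?_, ?_⟩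
  · let Q := Submodule.span ℝ (f '' Finset.Iic i)
    have hQ : Module.finrank ℝ Q = i + 1 := by rw [finrank_span_image, Fin.card_Iic]
    refine ⟨Q, hQ, (le_minRestrict ?_ fun v hv ↦ ?_).antisymm (h.minRestrict_le i (by omega))⟩
    · exact span_image_ne_bot f ⟨i, by simp⟩
    · exact h.mul_norm_le_norm_map (h.nonneg i) (fun j hj ↦ h.antitone (Finset.mem_Iic.mp hj)) hv
  · rintro _ ⟨P, hP, rfl⟩
    exact h.minRestrict_le i (by omega)

lemma mem_unitaryGroup_iff_exists_orthonormalBasis {ι 𝕜 : Type*} [Fintype ι] [DecidableEq ι]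
    [RCLike 𝕜] {k : Matrix ι ι 𝕜} :
    k ∈ Matrix.unitaryGroup ι 𝕜 ↔
      ∃ b : OrthonormalBasis ι 𝕜 (EuclideanSpace 𝕜 ι), ∀ i, b i = WithLp.toLp 2 (k.col i) := by
  have horth : k ∈ Matrix.unitaryGroup ι 𝕜 ↔ Orthonormal 𝕜 fun i ↦ WithLp.toLp 2 (k.col i) := by
    simp only [Matrix.mem_unitaryGroup_iff', orthonormal_iff_ite, ← Matrix.ext_iff,
      Matrix.one_apply, Matrix.mul_apply, Matrix.star_apply, PiLp.inner_apply, RCLike.inner_apply',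
      Matrix.col_apply, RCLike.star_def]
  rw [horth]
  refine ⟨fun hk ↦ ?_, fun ⟨b, hb⟩ ↦ funext hb ▸ b.orthonormal⟩
  have hk_univ : Orthonormal 𝕜 (Set.univ.domRestrict fun i ↦ WithLp.toLp 2 (k.col i)) :=
    hk.comp _ Subtype.val_injective
  obtain ⟨b, hb⟩ := hk_univ.exists_orthonormalBasis_extension_of_card_eq (by simp)
  exact ⟨b, fun i ↦ hb i (Set.mem_univ i)⟩

lemma mul_eq_mul_diagonal_iff {n 𝕜 : Type*} [Fintype n] [DecidableEq n] [RCLike 𝕜]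
    {g k l : Matrix n n 𝕜} {s : n → 𝕜} :
    g * l = k * Matrix.diagonal s ↔
      ∀ i, g.toEuclideanLin (WithLp.toLp 2 (l.col i)) = s i • WithLp.toLp 2 (k.col i) := by
  simp only [← Matrix.ext_iff, PiLp.ext_iff, Matrix.mul_diagonal, Matrix.toLpLin_toLp,
    Matrix.toLin'_apply, PiLp.smul_apply, Matrix.col_apply, smul_eq_mul, mul_comm (s _)]
  exact forall_comm

lemma isCartanAttractor_iff {p : ℕ} {U : Submodule ℝ (Euc d)} :
    IsCartanAttractor g p U ↔ ∃ s e f, IsSVD g.toEuclideanLin s e f ∧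
      U = Submodule.span ℝ (e '' {i : Fin d | (i : ℕ) < p}) := by
  constructor
  · rintro ⟨k, l, s, hk, hl, hs, hs0, rfl, rfl⟩
    obtain ⟨e, he⟩ := mem_unitaryGroup_iff_exists_orthonormalBasis.mp hk
    obtain ⟨f, hf⟩ := mem_unitaryGroup_iff_exists_orthonormalBasis.mp (Unitary.star_mem hl)
    have hmul : k * Matrix.diagonal s * l * star l = k * Matrix.diagonal s := by
      rw [Matrix.mul_assoc, Matrix.mem_unitaryGroup_iff.mp hl, Matrix.mul_one]
    refine ⟨s, e, f, ⟨hs, hs0, fun i ↦ ?_⟩, ?_⟩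
    · rw [hf, he, mul_eq_mul_diagonal_iff.mp hmul]
    · congr 1
      ext x
      simp only [Set.mem_ofPred_eq, Set.mem_image, he, eq_comm (a := x)]
      rfl
  · rintro ⟨s, e, f, h, rfl⟩
    let k : Matrix (Fin d) (Fin d) ℝ := Matrix.of fun j i ↦ e i j
    let l : Matrix (Fin d) (Fin d) ℝ := Matrix.of fun j i ↦ f i j
    have hk : k ∈ Matrix.unitaryGroup (Fin d) ℝ :=
      mem_unitaryGroup_iff_exists_orthonormalBasis.mpr ⟨e, fun _ ↦ rfl⟩
    have hl : l ∈ Matrix.unitaryGroup (Fin d) ℝ :=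
      mem_unitaryGroup_iff_exists_orthonormalBasis.mpr ⟨f, fun _ ↦ rfl⟩
    refine ⟨k, star l, s, hk, Unitary.star_mem hl, h.antitone, h.nonneg, ?_, ?_⟩
    · have hmul : g * l = k * Matrix.diagonal s := mul_eq_mul_diagonal_iff.mpr h.map
      rw [← hmul, Matrix.mul_assoc, Matrix.mem_unitaryGroup_iff.mp hl, Matrix.mul_one]
    · congr 1
      ext x
      simp only [Set.mem_ofPred_eq, Set.mem_image, eq_comm (a := x)]
      rfl

lemma isCartanAttractor_cartanAttractor (g : Matrix (Fin d) (Fin d) ℝ) (p : ℕ) :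
    IsCartanAttractor g p (cartanAttractor g p) := by
  obtain ⟨s, e, f, h⟩ :=
    exists_isSVD g.toEuclideanLin finrank_euclideanSpace_fin finrank_euclideanSpace_fin
  have hex : ∃ U, IsCartanAttractor g p U := ⟨_, isCartanAttractor_iff.mpr ⟨s, e, f, h, rfl⟩⟩
  rw [cartanAttractor, dif_pos hex]
  exact hex.choose_spec

end Matrices

section Contraction

variable {d p : ℕ} {g : GL (Fin d) ℝ} {P S U : Submodule ℝ (Euc d)}

lemma leftInverse_toEuclideanLin_mat (g : GL (Fin d) ℝ) :
    Function.LeftInverse (mat g).toEuclideanLin (mat g⁻¹).toEuclideanLin := fun v ↦ by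
  simp [mat, Matrix.toLpLin_apply]

lemma exists_isSVD_of_isCartanAttractor_inv (hpd : p ≤ d)
    (hS : IsCartanAttractor (mat g⁻¹) (d - p) S) :
    ∃ s e f, IsSVD (mat g).toEuclideanLin s e f ∧
      S = Submodule.span ℝ (f '' {i : Fin d | (i : ℕ) < p}ᶜ) := by
  obtain ⟨s, e, f, h, rfl⟩ := isCartanAttractor_iff.mp hS
  refine ⟨_, _, _, h.of_leftInverse (leftInverse_toEuclideanLin_mat g), ?_⟩
  have hrev : Fin.revPerm '' {i : Fin d | (i : ℕ) < p}ᶜ = {i : Fin d | (i : ℕ) < d - p} := by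
    rw [Equiv.image_eq_preimage_symm]
    ext i
    simp only [Fin.revPerm_symm, Set.mem_preimage, Fin.revPerm_apply, Set.mem_compl_iff,
      Set.mem_ofPred_eq, Fin.val_rev]
    omega
  rw [OrthonormalBasis.coe_reindex, Set.image_comp, Fin.revPerm_symm, hrev]

lemma IsCartanAttractor.ne_bot {g : Matrix (Fin d) (Fin d) ℝ} (hU : IsCartanAttractor g p U)
    (hp : 0 < p) (hd : 0 < d) : U ≠ ⊥ := by
  obtain ⟨s, e, f, -, rfl⟩ := isCartanAttractor_iff.mp hU
  exact span_image_ne_bot e ⟨⟨0, hd⟩, hp⟩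

lemma sinAngleTo_act_mul_sinAngleTo_le (hp : 1 ≤ p) (hpd : p < d)
    (hU : IsCartanAttractor (mat g) p U) (hS : IsCartanAttractor (mat g⁻¹) (d - p) S) (v : Euc d) :
    sinAngleTo U (act (mat g) v) * sinAngleTo S v ≤ sv (mat g) (p + 1) / sv (mat g) p := by
  obtain ⟨q, rfl⟩ := Nat.exists_eq_add_of_le' hp
  obtain ⟨s, e, f, h, rfl⟩ := exists_isSVD_of_isCartanAttractor_inv hpd.le hS
  obtain ⟨s', e', f', h', rfl⟩ := isCartanAttractor_iff.mp hU
  obtain rfl : s' = s := funext fun i ↦ (h'.sv_succ i).symm.trans (h.sv_succ i)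
  let i : Fin d := ⟨q, by omega⟩
  let j : Fin d := ⟨q + 1, hpd⟩
  have hpos : 0 < s' i :=
    h.pos (leftInverse_toEuclideanLin_mat g⁻¹).injective i
  rw [h.sv_succ i, h.sv_succ j]
  by_cases hgap : s' j < s' i
  · have hge : ∀ m ∈ {m : Fin d | (m : ℕ) < q + 1}, s' i ≤ s' m := fun m hm ↦
      h.antitone (Fin.le_def.mpr (Nat.le_of_lt_succ hm))
    have hle : ∀ m ∈ {m : Fin d | (m : ℕ) < q + 1}ᶜ, s' m ≤ s' j := fun m hm ↦
      h.antitone (Fin.le_def.mpr (not_lt.mp hm))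
    rw [h'.span_image_eq_of_ne h fun m hm n hn ↦
      ((hle n hn).trans_lt (hgap.trans_le (hge m hm))).ne']
    exact h.sinAngleTo_map_mul_sinAngleTo_le hpos hge (h.nonneg j) hle v
  · calc _ ≤ (1 : ℝ) := mul_le_one₀ (sinAngleTo_le_one _ _) (sinAngleTo_nonneg _ _)
          (sinAngleTo_le_one _ _)
      _ ≤ s' j / s' i := (one_le_div hpos).mpr (not_lt.mp hgap)

lemma bddBelow_angle (P S : Submodule ℝ (Euc d)) :
    BddBelow {θ | ∃ v ∈ P, v ≠ 0 ∧ ∃ w ∈ S, w ≠ 0 ∧ θ = InnerProductGeometry.angle v w} := by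
  refine ⟨0, ?_⟩
  rintro _ ⟨v, -, -, w, -, -, rfl⟩
  exact InnerProductGeometry.angle_nonneg v w

lemma subAngle_le_angle {v w : Euc d} (hv : v ∈ P) (hv0 : v ≠ 0) (hw : w ∈ S) (hw0 : w ≠ 0) :
    subAngle P S ≤ InnerProductGeometry.angle v w :=
  csInf_le (bddBelow_angle P S) ⟨v, hv, hv0, w, hw, hw0, rfl⟩

lemma subAngle_nonneg (P S : Submodule ℝ (Euc d)) : 0 ≤ subAngle P S := by
  refine Real.sInf_nonneg ?_
  rintro _ ⟨v, -, -, w, -, -, rfl⟩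
  exact InnerProductGeometry.angle_nonneg v w

lemma sin_subAngle_le_sinAngleTo (hS : S ≠ ⊥) {v : Euc d} (hv : v ∈ P) (hv0 : v ≠ 0) :
    Real.sin (subAngle P S) ≤ sinAngleTo S v := by
  obtain ⟨w, hw, hw0, hangle, hsin⟩ := exists_sin_angle_eq_sinAngleTo hS hv0
  rw [← hsin]
  refine Real.sin_le_sin_of_le_of_le_pi_div_two ?_ hangle (subAngle_le_angle hv hv0 hw hw0)
  linarith [Real.pi_pos, subAngle_nonneg P S]

lemma sin_subAngle_pos (hP : P ≠ ⊥) (hS : S ≠ ⊥) (hPS : Disjoint P S) :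
    0 < Real.sin (subAngle P S) := by
  obtain ⟨c, hc, hcP⟩ := exists_pos_le_sinAngleTo hPS
  obtain ⟨v, hv, hv0⟩ := Submodule.exists_mem_ne_zero_of_ne_bot hP
  obtain ⟨w, hw, hw0⟩ := Submodule.exists_mem_ne_zero_of_ne_bot hS
  have hclosure : subAngle P S ∈ closure
      {θ | ∃ v ∈ P, v ≠ 0 ∧ ∃ w ∈ S, w ≠ 0 ∧ θ = InnerProductGeometry.angle v w} :=
    csInf_mem_closure ⟨_, v, hv, hv0, w, hw, hw0, rfl⟩ (bddBelow_angle P S)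
  have hclosed : IsClosed {θ | c ≤ Real.sin θ} :=
    isClosed_le continuous_const Real.continuous_sin
  refine hc.trans_le (closure_minimal ?_ hclosed hclosure)
  rintro _ ⟨v, hv, hv0, w, hw, hw0, rfl⟩
  exact (hcP v hv hv0).trans (sinAngleTo_le_sin_angle hw hw0)

lemma grassDist_le {c : ℝ} (hc : 0 ≤ c) (hU : U ≠ ⊥)
    (hPU : ∀ v ∈ P, v ≠ 0 → sinAngleTo U v ≤ c) : grassDist P U ≤ c := by
  refine Real.sSup_le ?_ hc
  rintro _ ⟨v, hv, hv0, rfl⟩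
  obtain ⟨w, hw, hw0, -, hsin⟩ := exists_sin_angle_eq_sinAngleTo hU hv0
  have hbdd : BddBelow {s | ∃ w ∈ U, w ≠ 0 ∧ s = sinAngle v w} := by
    refine ⟨0, ?_⟩
    rintro _ ⟨w, -, -, rfl⟩
    exact InnerProductGeometry.sin_angle_nonneg v w
  exact (csInf_le hbdd ⟨w, hw, hw0, rfl⟩).trans (hsin.trans_le (hPU v hv hv0))

lemma sv_nonneg (g : Matrix (Fin d) (Fin d) ℝ) (p : ℕ) : 0 ≤ sv g p := by
  refine Real.sSup_nonneg ?_
  rintro _ ⟨P, -, rfl⟩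
  refine Real.sInf_nonneg ?_
  rintro _ ⟨v, -, -, rfl⟩
  exact norm_nonneg _

theorem stmt2_general (hp1 : 1 ≤ p) (hpd : p < d) (hU : IsCartanAttractor (mat g) p U)
    (hS : IsCartanAttractor (mat g⁻¹) (d - p) S) (hP : P ≠ ⊥) (hPS : Disjoint P S) :
    grassDist (mapMat (mat g) P) U ≤
      (sv (mat g) (p + 1) / sv (mat g) p) * (1 / Real.sin (subAngle P S)) := by
  have hU0 : U ≠ ⊥ := hU.ne_bot hp1 (by omega)
  have hS0 : S ≠ ⊥ := hS.ne_bot (by omega) (by omega)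
  have hsin : 0 < Real.sin (subAngle P S) := sin_subAngle_pos hP hS0 hPS
  have hratio : 0 ≤ sv (mat g) (p + 1) / sv (mat g) p := div_nonneg (sv_nonneg _ _) (sv_nonneg _ _)
  refine grassDist_le (by positivity) hU0 ?_
  rintro _ ⟨v, hv, rfl⟩ hgv0
  have hv0 : v ≠ 0 := fun h ↦ hgv0 (by rw [h, map_zero])
  rw [mul_one_div, le_div_iff₀ hsin]
  calc sinAngleTo U (act (mat g) v) * Real.sin (subAngle P S)
      ≤ sinAngleTo U (act (mat g) v) * sinAngleTo S v :=
        mul_le_mul_of_nonneg_left (sin_subAngle_le_sinAngleTo hS0 hv hv0) (sinAngleTo_nonneg _ _)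
    _ ≤ sv (mat g) (p + 1) / sv (mat g) p := sinAngleTo_act_mul_sinAngleTo_le hp1 hpd hU hS v

end Contraction

/-- Lemma A.6 of [BPS]: contraction towards the Cartan attractor. -/
theorem stmt2 {d : ℕ} (p : ℕ) (hp1 : 1 ≤ p) (hpd : p ≤ d - 1)
    (g : GL (Fin d) ℝ) (hg : HasGap (mat g) p)
    (P : Submodule ℝ (Euc d)) (hP : Module.finrank ℝ P = p)
    (htrans : P ⊓ cartanAttractor (mat (g⁻¹)) (d - p) = ⊥) :
    grassDist (mapMat (mat g) P) (cartanAttractor (mat g) p) ≤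
      (sv (mat g) (p + 1) / sv (mat g) p) *
        (1 / Real.sin (subAngle P (cartanAttractor (mat (g⁻¹)) (d - p)))) := by
  refine stmt2_general hp1 (by omega) (isCartanAttractor_cartanAttractor _ _)
    (isCartanAttractor_cartanAttractor _ _) ?_ (disjoint_iff.mpr htrans)
  exact Submodule.one_le_finrank_iff.mp (hP ▸ hp1)

end Paper
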